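/- arXiv:2501.19028 — 2 statements merged into one kernel-verified Lean document; each statement's English description precedes it below -/
import Mathlib

section
/- Consistency of approximating decision rules along epi-convergent subsequences: Under the hypotheses of the infinite-horizon consistency theorem (including 𝒱 compact under the Attouch–Wets distance dl and each B_ν having a fixed point V_ν = B_ν(V_ν) ∈ 𝒱), if V_{ν_κ} is a subsequence of (V_ν) that epi-converges to V, then V = B(V), and for every (x,ξ) ∈ 𝒳 × Ξ the outer limit of the sets argmin_{y∈𝒴(x,ξ)} { φ_{ν_κ}(x,y,ξ) + β V_{ν_κ}(y) } is contained in argmin_{y∈𝒴(x,ξ)} { φ(x,y,ξ) + β V(y) }, and this latter set is nonempty. -/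
open Filter MeasureTheory Topology Set

noncomputable section

/-- Extended-real to extended-nonnegative-real (positive part). -/
def erealToENN (x : EReal) : ENNReal := if x = ⊤ then ⊤ else ENNReal.ofReal x.toReal

/-- Integral of an extended-real-valued function. -/
def eintegral {Ω : Type*} [MeasurableSpace Ω] (P : Measure Ω) (g : Ω → EReal) : EReal :=
  ((∫⁻ ω, erealToENN (g ω) ∂P : ENNReal) : EReal) -
    ((∫⁻ ω, erealToENN (-(g ω)) ∂P : ENNReal) : EReal)

/-- Integrability of an extended-real-valued function. -/
def EIntegrable {Ω : Type*} [MeasurableSpace Ω] (P : Measure Ω) (g : Ω → EReal) : Prop :=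
  AEMeasurable g P ∧ (∫⁻ ω, erealToENN (g ω) ∂P) < ⊤ ∧ (∫⁻ ω, erealToENN (-(g ω)) ∂P) < ⊤

/-- g·1{g ≤ α}. -/
def truncBelow {Ω : Type*} (g : Ω → EReal) (α : ℝ) (ω : Ω) : EReal :=
  if g ω ≤ (α : EReal) then g ω else 0

/-- g·1{g ≥ α}. -/
def truncAbove {Ω : Type*} (g : Ω → EReal) (α : ℝ) (ω : Ω) : EReal :=
  if (α : EReal) ≤ g ω then g ω else 0

/-- Epi-convergence of a sequence of extended-real-valued functions on a set `Z`. -/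
def EpiConvergesOn {E : Type*} [TopologicalSpace E] (Z : Set E)
    (F : ℕ → E → EReal) (f : E → EReal) : Prop :=
  ∀ z ∈ Z,
    (∀ zs : ℕ → E, (∀ ν, zs ν ∈ Z) → Tendsto zs atTop (𝓝 z) →
      f z ≤ liminf (fun ν => F ν (zs ν)) atTop) ∧
    (∃ zs : ℕ → E, (∀ ν, zs ν ∈ Z) ∧ Tendsto zs atTop (𝓝 z) ∧
      limsup (fun ν => F ν (zs ν)) atTop ≤ f z)

/-- A sequence of functions is equi-lower semicontinuous on `Z`. -/
def EquiLscOn {E : Type*} [PseudoMetricSpace E] (Z : Set E) (F : ℕ → E → EReal) : Prop :=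
  ∀ z ∈ Z,
    limsup (fun ν => F ν z) atTop = ⊥ ∨
    ∀ ρ ε : ℝ, 0 < ρ → 0 < ε → ∃ ν' : ℕ, ∃ δ : ℝ, 0 < δ ∧ ∀ ν, ν' ≤ ν →
      min (F ν z - (ε : EReal)) (ρ : EReal) ≤
        ⨅ (w : E) (_ : w ∈ Z) (_ : dist w z ≤ δ), F ν w

/-- Equi-upper semicontinuity on `Z`. -/
def EquiUscOn {E : Type*} [PseudoMetricSpace E] (Z : Set E) (F : ℕ → E → EReal) : Prop :=
  EquiLscOn Z (fun ν z => -(F ν z))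

/-- Iterated lower limit as `(ν, x) → (∞, x̄)` with `x` ranging over `X`. -/
def liminfNuX {E : Type*} [PseudoMetricSpace E] (X : Set E) (xb : E)
    (h : ℕ → E → EReal) : EReal :=
  ⨆ (δ : ℝ) (_ : 0 < δ) (ν' : ℕ),
    ⨅ (ν : ℕ) (_ : ν' ≤ ν) (x : E) (_ : x ∈ X) (_ : dist x xb ≤ δ), h ν x

/-- Upper limit as `ν → ∞`. -/
def limsupNu (h : ℕ → EReal) : EReal := ⨅ (ν' : ℕ), ⨆ (ν : ℕ) (_ : ν' ≤ ν), h ν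

/-- Lower limit as `α → −∞`. -/
def liminfAlphaBot (G : ℝ → EReal) : EReal := ⨆ (αb : ℝ), ⨅ (α : ℝ) (_ : α ≤ αb), G α

/-- Upper limit as `α → ∞`. -/
def limsupAlphaTop (G : ℝ → EReal) : EReal := ⨅ (αb : ℝ), ⨆ (α : ℝ) (_ : αb ≤ α), G α

/-- Weak convergence of measures: integrals of bounded continuous functions converge. -/
def WeakConv {Ω : Type*} [TopologicalSpace Ω] [MeasurableSpace Ω]
    (Pν : ℕ → Measure Ω) (P : Measure Ω) : Prop :=
  ∀ h : Ω → ℝ, Continuous h → (∃ C : ℝ, ∀ ω, |h ω| ≤ C) →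
    Tendsto (fun ν => ∫ ω, h ω ∂(Pν ν)) atTop (𝓝 (∫ ω, h ω ∂P))

/-- The outer limit of a sequence of sets in a topological space. -/
def OuterLimit {X : Type*} [TopologicalSpace X] (S : ℕ → Set X) : Set X :=
  {x | ∃ φ : ℕ → ℕ, StrictMono φ ∧ ∃ s : ℕ → X, (∀ κ, s κ ∈ S (φ κ)) ∧
    Tendsto s atTop (𝓝 x)}

/-- The set of minimizers of `g` over `S`. -/
def ArgminOn {E : Type*} (S : Set E) (g : E → EReal) : Set E :=
  {y ∈ S | ∀ z ∈ S, g y ≤ g z}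

/-- `b(f)(x,ξ) = inf_{y ∈ 𝒴(x,ξ)} { φ(x,y,ξ) + β f(y) }`. -/
def bop {E Ξ' : Type*} (Y : E → Ξ' → Set E) (β : ℝ) (φ : E → E → Ξ' → ℝ)
    (f : E → EReal) (x : E) (ξ : Ξ') : EReal :=
  ⨅ (y : E) (_ : y ∈ Y x ξ), (((φ x y ξ : ℝ) : EReal) + (β : EReal) * f y)

/-- The epigraph of `f`, viewed within `X × ℝ`. -/
def epiSet {E : Type*} (X : Set E) (f : E → EReal) : Set (E × ℝ) :=
  {p | p.1 ∈ X ∧ f p.1 ≤ ((p.2 : ℝ) : EReal)}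

/-- The Attouch–Wets distance between `f` and `g` (epigraphs taken within `X × ℝ`,
with centre `zc`). -/
def awDist {E : Type*} [PseudoMetricSpace E] (X : Set E) (zc : E × ℝ)
    (f g : E → EReal) : ℝ :=
  ∫ ρ in Set.Ioi (0 : ℝ),
    (sSup ((fun z => |Metric.infDist z (epiSet X f) - Metric.infDist z (epiSet X g)|) ''
      (Metric.closedBall zc ρ))) * Real.exp (-ρ)

/-- `f` is a lower semicontinuous function on `X`, not identically `∞`. -/
def LscFcnOn {E : Type*} [TopologicalSpace E] (X : Set E) (f : E → EReal) : Prop :=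
  LowerSemicontinuousOn f X ∧ ∃ x ∈ X, f x ≠ ⊤

/-- `𝒱` is (sequentially) closed with respect to the Attouch–Wets distance. -/
def DlSeqClosed {E : Type*} [PseudoMetricSpace E] (X : Set E) (zc : E × ℝ)
    (𝒱 : Set (E → EReal)) : Prop :=
  ∀ Vs : ℕ → (E → EReal), (∀ ν, Vs ν ∈ 𝒱) → ∀ W, LscFcnOn X W →
    Tendsto (fun ν => awDist X zc (Vs ν) W) atTop (𝓝 0) → W ∈ 𝒱

/-- `𝒱` is (sequentially) compact with respect to the Attouch–Wets distance. -/
def DlSeqCompact {E : Type*} [PseudoMetricSpace E] (X : Set E) (zc : E × ℝ)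
    (𝒱 : Set (E → EReal)) : Prop :=
  ∀ Vs : ℕ → (E → EReal), (∀ ν, Vs ν ∈ 𝒱) → ∃ W ∈ 𝒱, ∃ φ : ℕ → ℕ,
    StrictMono φ ∧ Tendsto (fun κ => awDist X zc (Vs (φ κ)) W) atTop (𝓝 0)

/-- The outer limit, with respect to epi-convergence on `X`, of a sequence of sets
of functions. -/
def EpiOuterLimit {E : Type*} [TopologicalSpace E] (X : Set E)
    (S : ℕ → Set (E → EReal)) : Set (E → EReal) :=
  {W | ∃ φ : ℕ → ℕ, StrictMono φ ∧ ∃ s : ℕ → (E → EReal),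
    (∀ κ, s κ ∈ S (φ κ)) ∧ EpiConvergesOn X s W}

/-!
Attouch–Wets compactness identifies the epi-limit `V` on `X` with a member of `𝒱`, since the
distances to the epigraphs converge along a subsequence. Padding the given subsequence with that
member produces a full epi-convergent sequence in `𝒱`, so that the equi-semicontinuity and
asymptotic integrability hypotheses apply. Equi-lower semicontinuity upgrades epi-convergence to
pointwise convergence, and epi-convergence together with pointwise convergence passes from the
value functions to the stage objectives and, by compactness of `𝒴(x, ξ)`, to their infima and
minimizers. Fatou's lemma under weakly converging measures, applied to `b_ν` and to `-b_ν`, then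
lets the fixed-point equations `V_ν = B_ν(V_ν)` pass to the limit.
-/

/-! ### Epi-convergence -/

section Subsequence

variable {σ : ℕ → ℕ}

lemma atTop_eq_map_sup_of_injective (hσ : σ.Injective) :
    (atTop : Filter ℕ) = map σ atTop ⊔ atTop ⊓ 𝓟 (range σ)ᶜ := by
  have hmap : map σ atTop = atTop ⊓ 𝓟 (range σ) := by
    rw [← Nat.cofinite_eq_atTop, ← map_comap, hσ.comap_cofinite_eq]
  rw [hmap, ← inf_sup_left, sup_principal, union_compl_self, principal_univ, inf_top_eq]

lemma extend_const_eventuallyEq {α : Type*} (u : ℕ → α) (a : α) :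
    Function.extend σ u (fun _ => a) =ᶠ[atTop ⊓ 𝓟 (range σ)ᶜ] fun _ => a :=
  eventually_inf_principal.2 <| .of_forall fun _ hν => Function.extend_apply' _ _ _ hν

lemma tendsto_extend_const {E : Type*} [TopologicalSpace E] (hσ : σ.Injective) {zs : ℕ → E}
    {z : E} (h : Tendsto zs atTop (𝓝 z)) :
    Tendsto (Function.extend σ zs fun _ => z) atTop (𝓝 z) := by
  rw [atTop_eq_map_sup_of_injective hσ, tendsto_sup, tendsto_map'_iff,
    Function.extend_comp hσ]
  exact ⟨h, tendsto_const_nhds.congr' (extend_const_eventuallyEq zs z).symm⟩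

lemma extend_const_mem {α : Type*} {s : Set α} (hσ : σ.Injective) {u : ℕ → α} {a : α}
    (hu : ∀ κ, u κ ∈ s) (ha : a ∈ s) (ν : ℕ) : Function.extend σ u (fun _ => a) ν ∈ s := by
  by_cases hν : ν ∈ range σ
  · obtain ⟨κ, rfl⟩ := hν
    exact hσ.extend_apply u _ κ ▸ hu κ
  · exact (Function.extend_apply' u _ ν hν).symm ▸ ha

end Subsequence

namespace EpiConvergesOn

section TopologicalSpace

variable {E : Type*} [TopologicalSpace E] {Z : Set E} {F : ℕ → E → EReal} {f g : E → EReal}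

lemma congr_limit (h : EpiConvergesOn Z F f) (hfg : EqOn f g Z) : EpiConvergesOn Z F g :=
  fun z hz => hfg hz ▸ h z hz

lemma extend_const (h : EpiConvergesOn Z F f) (hf : LowerSemicontinuousOn f Z) {σ : ℕ → ℕ}
    (hσ : σ.Injective) : EpiConvergesOn Z (Function.extend σ F fun _ => f) f := by
  refine fun z hz => ⟨fun zs hzs hlim => ?_, ?_⟩
  · have hrest : f z ≤ liminf (fun ν => f (zs ν)) (atTop ⊓ 𝓟 (range σ)ᶜ) :=
      (hf.le_liminf z hz).trans <| Tendsto.liminf_le_liminf_comp <|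
        (tendsto_nhdsWithin_iff.2 ⟨hlim, .of_forall hzs⟩).mono_left inf_le_left
    have hsub : f z ≤ liminf (fun κ => F κ (zs (σ κ))) atTop :=
      (h z hz).1 _ (fun κ => hzs (σ κ)) (hlim.comp hσ.nat_tendsto_atTop)
    rw [atTop_eq_map_sup_of_injective hσ, liminf_sup_filter, le_inf_iff]
    refine ⟨?_, hrest.trans_eq (liminf_congr ?_)⟩
    · simpa only [← liminf_comp, Function.comp_def, hσ.extend_apply] using hsub
    · filter_upwards [extend_const_eventuallyEq F f] with ν hν
      rw [hν]
  · obtain ⟨zs, hzs, hlim, hsup⟩ := (h z hz).2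
    refine ⟨Function.extend σ zs fun _ => z, extend_const_mem hσ hzs hz,
      tendsto_extend_const hσ hlim, ?_⟩
    rw [atTop_eq_map_sup_of_injective hσ, limsup_sup_filter, sup_le_iff]
    constructor
    · simpa only [← limsup_comp, Function.comp_def, hσ.extend_apply] using hsup
    · refine limsup_le_of_le (h := ?_)
      filter_upwards [extend_const_eventuallyEq F f, extend_const_eventuallyEq zs z] with ν hF hz
      rw [hF, hz]

/-- Epi-convergence is formulated with sequences of points; padding a sequence of points along a
subsequence of indices with its own limit turns it into the corresponding filter statement. -/
lemma le_liminf_prod [FirstCountableTopology E] (h : EpiConvergesOn Z F f) {z : E} (hz : z ∈ Z) :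
    f z ≤ liminf (Function.uncurry F) (atTop ×ˢ 𝓝[Z] z) := by
  rw [le_liminf_iff']
  intro a ha
  by_contra hfreq
  have hfreq : ∃ᶠ p in atTop ×ˢ 𝓝[Z] z, F p.1 p.2 < a ∧ p.2 ∈ Z :=
    ((not_eventually.1 hfreq).mono fun _ => lt_of_not_ge).and_eventually
      (tendsto_snd.eventually self_mem_nhdsWithin)
  obtain ⟨p, hp, hpa⟩ := exists_seq_forall_of_frequently hfreq
  obtain ⟨τ, hτ, hσ⟩ := strictMono_subseq_of_tendsto_atTop (tendsto_fst.comp hp)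
  have hzs : Tendsto (fun k => (p (τ k)).2) atTop (𝓝 z) :=
    (tendsto_nhds_of_tendsto_nhdsWithin (tendsto_snd.comp hp)).comp hτ.tendsto_atTop
  have hsub : liminf (fun k => F (p (τ k)).1 (p (τ k)).2) atTop ≤ a :=
    liminf_le_of_le (h := fun b hb => (hb.exists).elim fun k hk => hk.trans (hpa (τ k)).1.le)
  refine ha.not_ge (((h z hz).1 _ (extend_const_mem hσ.injective (fun k => (hpa (τ k)).2) hz)
    (tendsto_extend_const hσ.injective hzs)).trans (le_trans ?_ hsub))
  refine (Tendsto.liminf_le_liminf_comp hσ.tendsto_atTop).trans_eq (liminf_congr ?_)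
  exact .of_forall fun k => congrArg _ (hσ.injective.extend_apply _ _ k)

lemma comp_tendsto [FirstCountableTopology E] (h : EpiConvergesOn Z F f) {τ : ℕ → ℕ}
    (hτ : Tendsto τ atTop atTop) : EpiConvergesOn Z (fun κ => F (τ κ)) f := by
  refine fun z hz => ⟨fun zs hzs hlim => ?_, ?_⟩
  · exact (h.le_liminf_prod hz).trans <| Tendsto.liminf_le_liminf_comp <|
      hτ.prodMk (tendsto_nhdsWithin_iff.2 ⟨hlim, .of_forall hzs⟩)
  · obtain ⟨zs, hzs, hlim, hsup⟩ := (h z hz).2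
    exact ⟨zs ∘ τ, fun κ => hzs (τ κ), hlim.comp hτ, hτ.limsup_comp_le_limsup.trans hsup⟩

end TopologicalSpace

end EpiConvergesOn

namespace EquiLscOn

variable {E : Type*} [PseudoMetricSpace E] {Z : Set E} {F : ℕ → E → EReal} {z : E}

lemma eventually_le_of_lt (h : EquiLscOn Z F) (hz : z ∈ Z) {a b : ℝ} (hab : a < b) :
    ∀ᶠ p in atTop ×ˢ 𝓝[Z] z, (b : EReal) ≤ F p.1 z → (a : EReal) ≤ F p.1 p.2 := by
  rcases h z hz with hbot | hmin
  · have hlt : ∀ᶠ ν in atTop, F ν z < b :=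
      eventually_lt_of_limsup_lt (hbot ▸ EReal.bot_lt_coe b)
    exact (tendsto_fst.eventually hlt).mono fun _ hp hb => absurd hb hp.not_ge
  · obtain ⟨N, δ, hδ, hN⟩ := hmin (max a 1) (b - a) (by positivity) (sub_pos.2 hab)
    filter_upwards [tendsto_fst.eventually (eventually_ge_atTop N),
      tendsto_snd.eventually self_mem_nhdsWithin,
      tendsto_snd.eventually (mem_nhdsWithin_of_mem_nhds (Metric.closedBall_mem_nhds z hδ))]
      with p hpN hpZ hpδ hb
    have ha : (a : EReal) ≤ F p.1 z - ((b - a : ℝ) : EReal) := by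
      rwa [EReal.le_sub_iff_add_le (.inl <| EReal.coe_ne_bot _) (.inl <| EReal.coe_ne_top _),
        ← EReal.coe_add, add_sub_cancel]
    calc (a : EReal) ≤ min (F p.1 z - ((b - a : ℝ) : EReal)) ((max a 1 : ℝ) : EReal) :=
          le_min ha (EReal.coe_le_coe_iff.2 (le_max_left a 1))
      _ ≤ ⨅ (w : E) (_ : w ∈ Z) (_ : dist w z ≤ δ), F p.1 w := hN p.1 hpN
      _ ≤ F p.1 p.2 := iInf₂_le_of_le p.2 hpZ (iInf_le _ hpδ)

lemma liminf_le_liminf_prod (h : EquiLscOn Z F) (hz : z ∈ Z) :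
    liminf (fun ν => F ν z) atTop ≤ liminf (Function.uncurry F) (atTop ×ˢ 𝓝[Z] z) := by
  rw [le_liminf_iff']
  intro y hy
  obtain ⟨a, hya, hay⟩ := EReal.lt_iff_exists_real_btwn.1 hy
  obtain ⟨b, hab, hb⟩ := EReal.lt_iff_exists_real_btwn.1 hay
  filter_upwards [h.eventually_le_of_lt hz (EReal.coe_lt_coe_iff.1 hab),
    tendsto_fst.eventually (eventually_lt_of_lt_liminf hb)] with p hp hpb
  exact hya.le.trans (hp hpb.le)

lemma tendsto_of_epiConvergesOn (h : EquiLscOn Z F) {f : E → EReal} (hf : EpiConvergesOn Z F f)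
    (hz : z ∈ Z) : Tendsto (fun ν => F ν z) atTop (𝓝 (f z)) := by
  refine tendsto_of_le_liminf_of_limsup_le
    ((hf z hz).1 (fun _ => z) (fun _ => hz) tendsto_const_nhds) ?_
  rw [limsup_le_iff]
  intro y hy
  obtain ⟨zs, hzs, hlim, hsup⟩ := (hf z hz).2
  obtain ⟨b, hfb, hby⟩ := EReal.lt_iff_exists_real_btwn.1 hy
  obtain ⟨a, hfa, hab⟩ := EReal.lt_iff_exists_real_btwn.1 hfb
  have hzsZ : Tendsto (fun ν => (ν, zs ν)) atTop (atTop ×ˢ 𝓝[Z] z) :=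
    tendsto_id.prodMk (tendsto_nhdsWithin_iff.2 ⟨hlim, .of_forall hzs⟩)
  filter_upwards [hzsZ.eventually (h.eventually_le_of_lt hz (EReal.coe_lt_coe_iff.1 hab)),
    eventually_lt_of_limsup_lt (hsup.trans_lt hfa)] with ν hν hνa
  exact (not_le.1 fun hb => hνa.not_ge (hν hb)).trans hby

end EquiLscOn

lemma eventually_forall_mem_of_isCompact {E ι : Type*} [TopologicalSpace E] {K : Set E}
    (hK : IsCompact K) {l : Filter ι} {p : ι → E → Prop}
    (h : ∀ y ∈ K, ∀ᶠ q in l ×ˢ 𝓝[K] y, p q.1 q.2) :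
    ∀ᶠ i in l, ∀ y ∈ K, p i y := by
  have hnhds : ∀ᶠ q in l ×ˢ 𝓝ˢ K, q.2 ∈ K → p q.1 q.2 :=
    hK.mem_prod_nhdsSet_of_forall fun y hy => by
      have hy := h y hy
      rwa [nhdsWithin, prod_eq_inf, comap_inf, comap_principal, ← inf_assoc, ← prod_eq_inf,
        eventually_inf_principal] at hy
  exact hnhds.curry.mono fun i hi y hy => hi.self_of_nhdsSet y hy hy

/-- Epi-convergence together with pointwise convergence of a family of extended-real-valued
functions on `Z` along a filter `l`: the pointwise limits are also lower bounds for the joint lower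
limits, as the index runs along `l` and the point approaches its limit within `Z`. -/
structure EpiPointwiseTendstoOn {ι E : Type*} [TopologicalSpace E] (F : ι → E → EReal)
    (l : Filter ι) (f : E → EReal) (Z : Set E) : Prop where
  le_liminf : ∀ z ∈ Z, f z ≤ liminf (Function.uncurry F) (l ×ˢ 𝓝[Z] z)
  tendsto : ∀ z ∈ Z, Tendsto (fun i => F i z) l (𝓝 (f z))

lemma EpiConvergesOn.epiPointwiseTendstoOn {E : Type*} [TopologicalSpace E]
    [FirstCountableTopology E] {Z : Set E} {F : ℕ → E → EReal} {f : E → EReal}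
    (h : EpiConvergesOn Z F f) (hp : ∀ z ∈ Z, Tendsto (fun ν => F ν z) atTop (𝓝 (f z))) :
    EpiPointwiseTendstoOn F atTop f Z :=
  ⟨fun _ hz => h.le_liminf_prod hz, hp⟩

lemma EquiLscOn.epiPointwiseTendstoOn {E : Type*} [PseudoMetricSpace E] {Z : Set E}
    {F : ℕ → E → EReal} {f : E → EReal} (h : EquiLscOn Z F)
    (hp : ∀ z ∈ Z, Tendsto (fun ν => F ν z) atTop (𝓝 (f z))) :
    EpiPointwiseTendstoOn F atTop f Z :=
  ⟨fun z hz => (hp z hz).liminf_eq ▸ h.liminf_le_liminf_prod hz, hp⟩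

namespace EpiPointwiseTendstoOn

variable {ι E : Type*} [TopologicalSpace E] {F : ι → E → EReal} {l : Filter ι} {f : E → EReal}
  {Z : Set E}

lemma comp_tendsto {κ : Type*} {l' : Filter κ} {τ : κ → ι} (h : EpiPointwiseTendstoOn F l f Z)
    (hτ : Tendsto τ l' l) : EpiPointwiseTendstoOn (fun k => F (τ k)) l' f Z where
  le_liminf z hz :=
    (h.le_liminf z hz).trans ((hτ.prodMap tendsto_id).liminf_le_liminf_comp)
  tendsto z hz := (h.tendsto z hz).comp hτ

lemma comp_continuousOn {E' : Type*} [TopologicalSpace E'] {Z' : Set E'} {g : E' → E}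
    (h : EpiPointwiseTendstoOn F l f Z) (hg : ContinuousOn g Z') (hm : MapsTo g Z' Z) :
    EpiPointwiseTendstoOn (fun i w => F i (g w)) l (fun w => f (g w)) Z' where
  le_liminf w hw :=
    (h.le_liminf (g w) (hm hw)).trans
      (tendsto_id.prodMap ((hg w hw).tendsto_nhdsWithin hm)).liminf_le_liminf_comp
  tendsto w hw := h.tendsto (g w) (hm hw)

lemma coe_add_const_mul [l.NeBot] {u : ι → E → ℝ} {u₀ : E → ℝ} {β : ℝ} (hβ : 0 ≤ β)
    (hu : EpiPointwiseTendstoOn (fun i z => (u i z : EReal)) l (fun z => (u₀ z : EReal)) Z)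
    (hF : EpiPointwiseTendstoOn F l f Z) :
    EpiPointwiseTendstoOn (fun i z => (u i z : EReal) + (β : EReal) * F i z) l
      (fun z => (u₀ z : EReal) + (β : EReal) * f z) Z where
  le_liminf z hz := by
    have : (l ×ˢ 𝓝[Z] z).NeBot := prod.instNeBot (hg := nhdsWithin_neBot_of_mem hz)
    have hβ' : (0 : EReal) ≤ β := EReal.coe_nonneg.2 hβ
    calc (u₀ z : EReal) + β * f z
        ≤ liminf (fun q => (u q.1 q.2 : EReal)) (l ×ˢ 𝓝[Z] z)
          + β * liminf (Function.uncurry F) (l ×ˢ 𝓝[Z] z) :=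
          add_le_add (hu.le_liminf z hz) (mul_le_mul_of_nonneg_left (hF.le_liminf z hz) hβ')
      _ = liminf (fun q => (u q.1 q.2 : EReal)) (l ×ˢ 𝓝[Z] z)
          + liminf (fun q => β * F q.1 q.2) (l ×ˢ 𝓝[Z] z) :=
          congrArg _ (EReal.liminf_const_mul_of_nonneg_of_ne_top hβ' (EReal.coe_ne_top β)).symm
      _ ≤ liminf (fun q => (u q.1 q.2 : EReal) + β * F q.1 q.2) (l ×ˢ 𝓝[Z] z) :=
          EReal.le_liminf_add
  tendsto z hz :=
    (EReal.continuousAt_add (.inl <| EReal.coe_ne_top _) (.inl <| EReal.coe_ne_bot _)).tendsto.comp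
      ((hu.tendsto z hz).prodMk_nhds <| EReal.Tendsto.const_mul (hF.tendsto z hz)
        (.inl <| EReal.coe_ne_bot β) (.inl <| EReal.coe_ne_top β))

lemma lowerSemicontinuousOn [l.NeBot] (h : EpiPointwiseTendstoOn F l f Z) :
    LowerSemicontinuousOn f Z := by
  intro z hz a ha
  obtain ⟨b, hab, hb⟩ := exists_between ha
  have hev : ∀ᶠ q in l ×ˢ 𝓝[Z] z, b < F q.1 q.2 :=
    eventually_lt_of_lt_liminf (hb.trans_le (h.le_liminf z hz))
  filter_upwards [(prod_comm (f := l) ▸ hev).curry, self_mem_nhdsWithin] with w hw hwZ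
  exact hab.trans_le (ge_of_tendsto (h.tendsto w hwZ) (hw.mono fun _ => le_of_lt))

lemma tendsto_iInf (h : EpiPointwiseTendstoOn F l f Z) (hZ : IsCompact Z) :
    Tendsto (fun i => ⨅ y ∈ Z, F i y) l (𝓝 (⨅ y ∈ Z, f y)) := by
  refine tendsto_order.2 ⟨fun a ha => ?_, fun b hb => ?_⟩
  · obtain ⟨c, hac, hc⟩ := exists_between ha
    have hev : ∀ᶠ i in l, ∀ y ∈ Z, c < F i y := eventually_forall_mem_of_isCompact hZ fun y hy =>
      eventually_lt_of_lt_liminf (hc.trans_le ((iInf₂_le y hy).trans (h.le_liminf y hy)))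
    exact hev.mono fun i hi => hac.trans_le (le_iInf₂ fun y hy => (hi y hy).le)
  · obtain ⟨y, hy⟩ := iInf_lt_iff.1 hb
    obtain ⟨hyZ, hyb⟩ := iInf_lt_iff.1 hy
    exact ((h.tendsto y hyZ).eventually_lt_const hyb).mono fun i hi => (iInf₂_le y hyZ).trans_lt hi

lemma nonempty_argminOn [l.NeBot] (h : EpiPointwiseTendstoOn F l f Z) (hZ : IsCompact Z)
    (hne : Z.Nonempty) : (ArgminOn Z f).Nonempty :=
  let ⟨y, hy, hmin⟩ := h.lowerSemicontinuousOn.exists_isMinOn hne hZ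
  ⟨y, hy, fun _ hw => hmin hw⟩

lemma outerLimit_argminOn_subset {F : ℕ → E → EReal} (h : EpiPointwiseTendstoOn F atTop f Z)
    (hZ : IsClosed Z) : OuterLimit (fun ν => ArgminOn Z (F ν)) ⊆ ArgminOn Z f := by
  rintro y ⟨τ, hτ, s, hs, hlim⟩
  have hy : y ∈ Z := hZ.mem_of_tendsto hlim (.of_forall fun k => (hs k).1)
  refine ⟨hy, fun w hw => ?_⟩
  have hjoint : Tendsto (fun k => (τ k, s k)) atTop (atTop ×ˢ 𝓝[Z] y) :=
    hτ.tendsto_atTop.prodMk (tendsto_nhdsWithin_iff.2 ⟨hlim, .of_forall fun k => (hs k).1⟩)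
  calc f y ≤ liminf (fun k => F (τ k) (s k)) atTop :=
        (h.le_liminf y hy).trans hjoint.liminf_le_liminf_comp
    _ ≤ liminf (fun k => F (τ k) w) atTop :=
        liminf_le_liminf (.of_forall fun k => (hs k).2 w hw)
    _ = f w := ((h.tendsto w hw).comp hτ.tendsto_atTop).liminf_eq

end EpiPointwiseTendstoOn

/-! ### Extended-real integrals under weak convergence of measures -/

lemma toReal_eq_erealToENN_sub (x : EReal) :
    x.toReal = (erealToENN x).toReal - (erealToENN (-x)).toReal := by
  induction x with
  | bot | top => simp [erealToENN]
  | coe x => simp [erealToENN, ENNReal.toReal_ofReal', ← EReal.coe_neg]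

lemma truncBelow_neg {Ω : Type*} (g : Ω → EReal) (α : ℝ) :
    truncBelow (fun ω => -g ω) α = fun ω => -truncAbove g (-α) ω := by
  funext ω
  simp only [truncBelow, truncAbove, EReal.coe_neg, EReal.neg_le, apply_ite (-· : EReal → EReal),
    neg_zero]

section Integral

variable {Ω : Type*} [MeasurableSpace Ω] {P : Measure Ω} {g : Ω → EReal}

lemma aemeasurable_erealToENN (hg : AEMeasurable g P) :
    AEMeasurable (fun ω => erealToENN (g ω)) P :=
  EReal.continuous_toENNReal.measurable.comp_aemeasurable hg

namespace EIntegrable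

lemma neg (hg : EIntegrable P g) : EIntegrable P fun ω => -g ω :=
  ⟨continuous_neg.measurable.comp_aemeasurable hg.1, hg.2.2, by simpa only [neg_neg] using hg.2.1⟩

lemma ite_zero (hg : EIntegrable P g) {p : EReal → Prop} [DecidablePred p]
    (hp : MeasurableSet {x | p x}) : EIntegrable P fun ω => if p (g ω) then g ω else 0 := by
  have hm : Measurable fun x : EReal => if p x then x else 0 :=
    Measurable.ite hp measurable_id measurable_const
  refine ⟨hm.comp_aemeasurable hg.1, (lintegral_mono fun ω => ?_).trans_lt hg.2.1,
    (lintegral_mono fun ω => ?_).trans_lt hg.2.2⟩ <;>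
  · by_cases hω : p (g ω) <;> simp [hω, erealToENN]

lemma truncBelow (hg : EIntegrable P g) (α : ℝ) : EIntegrable P (truncBelow g α) :=
  hg.ite_zero measurableSet_Iic

lemma truncAbove (hg : EIntegrable P g) (α : ℝ) : EIntegrable P (truncAbove g α) :=
  hg.ite_zero measurableSet_Ici

lemma integrable_toReal (hg : EIntegrable P g) : Integrable (fun ω => (g ω).toReal) P := by
  simp only [toReal_eq_erealToENN_sub]
  exact (integrable_toReal_of_lintegral_ne_top (aemeasurable_erealToENN hg.1) hg.2.1.ne).sub
    (integrable_toReal_of_lintegral_ne_top (aemeasurable_erealToENN hg.neg.1) hg.2.2.ne)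

lemma integrable_toReal_add_const [IsFiniteMeasure P] (hg : EIntegrable P g) (M : ℝ) :
    Integrable (fun ω => (g ω).toReal + M) P :=
  hg.integrable_toReal.add (integrable_const M)

lemma integral_toReal_add_const [IsProbabilityMeasure P] (hg : EIntegrable P g) (M : ℝ) :
    ∫ ω, ((g ω).toReal + M) ∂P = ∫ ω, (g ω).toReal ∂P + M := by
  rw [integral_add hg.integrable_toReal (integrable_const M), integral_const, probReal_univ,
    one_smul]

lemma ae_erealToENN_lt_top (hg : EIntegrable P g) : ∀ᵐ ω ∂P, erealToENN (g ω) < ⊤ :=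
  ae_lt_top' (aemeasurable_erealToENN hg.1) hg.2.1.ne

lemma ae_coe_toReal_eq (hg : EIntegrable P g) : ∀ᵐ ω ∂P, ((g ω).toReal : EReal) = g ω := by
  filter_upwards [hg.ae_erealToENN_lt_top, hg.neg.ae_erealToENN_lt_top] with ω hp hn
  exact EReal.coe_toReal (EReal.toENNReal_ne_top_iff.1 hp.ne)
    fun h => EReal.toENNReal_ne_top_iff.1 hn.ne (EReal.neg_eq_top_iff.2 h)

lemma eintegral_eq_coe (hg : EIntegrable P g) :
    eintegral P g = ((∫ ω, (g ω).toReal ∂P : ℝ) : EReal) := by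
  have hm := aemeasurable_erealToENN hg.1
  have hm' := aemeasurable_erealToENN hg.neg.1
  simp only [toReal_eq_erealToENN_sub]
  rw [integral_sub (integrable_toReal_of_lintegral_ne_top hm hg.2.1.ne)
      (integrable_toReal_of_lintegral_ne_top hm' hg.2.2.ne),
    integral_toReal hm hg.ae_erealToENN_lt_top, integral_toReal hm' hg.neg.ae_erealToENN_lt_top,
    EReal.coe_sub, EReal.coe_ennreal_toReal hg.2.1.ne, EReal.coe_ennreal_toReal hg.2.2.ne,
    eintegral]

lemma eintegral_neg (hg : EIntegrable P g) : eintegral P (fun ω => -g ω) = -eintegral P g := by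
  simp only [hg.neg.eintegral_eq_coe, hg.eintegral_eq_coe, EReal.toReal_neg_eq, integral_neg,
    EReal.coe_neg]

lemma ofReal_integral_max_add_eq [IsFiniteMeasure P] (hg : EIntegrable P g) (M : ℝ) :
    ENNReal.ofReal (∫ ω, max ((g ω).toReal + M) 0 ∂P) =
      ∫⁻ t in Ioi (0 : ℝ), P {ω | ((t - M : ℝ) : EReal) < g ω} := by
  have hint := (hg.integrable_toReal_add_const M).pos_part
  have hnonneg : 0 ≤ᵐ[P] fun ω => max ((g ω).toReal + M) 0 := .of_forall fun _ => le_max_right _ _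
  rw [ofReal_integral_eq_lintegral_ofReal hint hnonneg,
    lintegral_eq_lintegral_meas_lt P hnonneg hint.aemeasurable]
  refine setLIntegral_congr_fun measurableSet_Ioi fun t ht => measure_congr ?_
  filter_upwards [hg.ae_coe_toReal_eq] with ω hω
  refine propext ?_
  change t < max ((g ω).toReal + M) 0 ↔ ((t - M : ℝ) : EReal) < g ω
  rw [← hω, EReal.coe_lt_coe_iff, EReal.toReal_coe, sub_lt_iff_lt_add, lt_max_iff,
    or_iff_left (mem_Ioi.1 ht).not_gt]

lemma integral_truncBelow_add_integral_max_le [IsProbabilityMeasure P] (hg : EIntegrable P g)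
    {M : ℝ} (hM : 0 ≤ M) :
    ∫ ω, (_root_.truncBelow g (-M) ω).toReal ∂P + ∫ ω, max ((g ω).toReal + M) 0 ∂P
      ≤ ∫ ω, (g ω).toReal ∂P + M := by
  have hint := hg.integrable_toReal_add_const M
  have htrunc := (hg.truncBelow (-M)).integrable_toReal
  calc ∫ ω, (_root_.truncBelow g (-M) ω).toReal ∂P + ∫ ω, max ((g ω).toReal + M) 0 ∂P
      = ∫ ω, ((_root_.truncBelow g (-M) ω).toReal + max ((g ω).toReal + M) 0) ∂P :=
        (integral_add htrunc hint.pos_part).symm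
    _ ≤ ∫ ω, ((g ω).toReal + M) ∂P := by
        refine integral_mono_ae (htrunc.add hint.pos_part) hint ?_
        filter_upwards [hg.ae_coe_toReal_eq] with ω hω
        have hiff : g ω ≤ ((-M : ℝ) : EReal) ↔ (g ω).toReal ≤ -M := by
          rw [← EReal.coe_le_coe_iff, hω]
        by_cases hle : g ω ≤ ((-M : ℝ) : EReal)
        · have hneg := hiff.1 hle
          have hmax : max ((g ω).toReal + M) 0 = 0 := max_eq_right (by linarith)
          simp only [_root_.truncBelow, if_pos hle, hmax]
          linarith
        · have hpos := lt_of_not_ge (hiff.not.1 hle)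
          have hmax : max ((g ω).toReal + M) 0 = (g ω).toReal + M := max_eq_left (by linarith)
          simp only [_root_.truncBelow, if_neg hle, EReal.toReal_zero, zero_add, hmax, le_refl]
    _ = ∫ ω, (g ω).toReal ∂P + M := hg.integral_toReal_add_const M

end EIntegrable

/-- Asymptotic inf-integrability of a sequence of integrands under varying measures: the integrals
of the lower tails `g ν · 1{g ν ≤ α}` are asymptotically nonnegative as `ν → ∞` and then
`α → -∞`. -/
def AsympInfIntegrable (Pν : ℕ → Measure Ω) (g : ℕ → Ω → EReal) : Prop :=
  ∀ ε : ℝ, 0 < ε → ∃ αb : ℝ, ∀ α ≤ αb, ∀ᶠ ν in atTop,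
    ((-ε : ℝ) : EReal) ≤ eintegral (Pν ν) (truncBelow (g ν) α)

lemma asympInfIntegrable_of_liminfAlphaBot {E : Type*} [PseudoMetricSpace E] {X : Set E} {x : E}
    (hx : x ∈ X) {Pν : ℕ → Measure Ω} {g : ℕ → E → Ω → EReal}
    (h : liminfAlphaBot (fun α => liminfNuX X x (fun ν y =>
      eintegral (Pν ν) (truncBelow (g ν y) α))) = 0) :
    AsympInfIntegrable Pν fun ν => g ν x := by
  intro ε hε
  have hlt : ((-ε : ℝ) : EReal) < 0 := EReal.coe_neg'.2 (neg_lt_zero.2 hε)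
  rw [← h] at hlt
  obtain ⟨αb, hαb⟩ := lt_iSup_iff.1 hlt
  refine ⟨αb, fun α hα => ?_⟩
  have hα := hαb.trans_le (iInf₂_le α hα)
  simp only [liminfNuX, lt_iSup_iff] at hα
  obtain ⟨δ, hδ, N, hN⟩ := hα
  filter_upwards [eventually_ge_atTop N] with ν hν
  have hdist : dist x x ≤ δ := (dist_self x).trans_le hδ.le
  exact hN.le.trans ((iInf₂_le ν hν).trans (iInf₂_le_of_le x hx (iInf_le _ hdist)))

lemma asympInfIntegrable_neg_of_limsupAlphaTop {Pν : ℕ → Measure Ω} {g : ℕ → Ω → EReal}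
    (hg : ∀ ν, EIntegrable (Pν ν) (g ν))
    (h : limsupAlphaTop (fun α => limsupNu (fun ν =>
      eintegral (Pν ν) (truncAbove (g ν) α))) = 0) :
    AsympInfIntegrable Pν fun ν ω => -g ν ω := by
  intro ε hε
  have hlt : (0 : EReal) < (ε : EReal) := EReal.coe_pos.2 hε
  rw [← h] at hlt
  obtain ⟨αb, hαb⟩ := iInf_lt_iff.1 hlt
  refine ⟨-αb, fun α hα => ?_⟩
  have hα : limsupNu (fun ν => eintegral (Pν ν) (truncAbove (g ν) (-α))) < ε :=
    (le_iSup₂ (f := fun (α : ℝ) (_ : αb ≤ α) => limsupNu (fun ν =>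
      eintegral (Pν ν) (truncAbove (g ν) α))) (-α) (le_neg_of_le_neg hα)).trans_lt hαb
  obtain ⟨N, hN⟩ := iInf_lt_iff.1 hα
  filter_upwards [eventually_ge_atTop N] with ν hν
  have htail : eintegral (Pν ν) (truncAbove (g ν) (-α)) ≤ ε :=
    (le_iSup₂ (f := fun (ν : ℕ) (_ : N ≤ ν) =>
      eintegral (Pν ν) (truncAbove (g ν) (-α))) ν hν).trans hN.le
  rw [truncBelow_neg, ((hg ν).truncAbove _).eintegral_neg, EReal.coe_neg]
  exact EReal.neg_le_neg_iff.2 htail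

end Integral

section WeakConvergence

variable {S : Type*} [PseudoMetricSpace S] [MeasurableSpace S] [OpensMeasurableSpace S]
  {P : Measure S} {Pν : ℕ → Measure S} [IsProbabilityMeasure P] [∀ ν, IsProbabilityMeasure (Pν ν)]
  {g : ℕ → S → EReal} {g₀ : S → EReal}

lemma WeakConv.le_liminf_measure_of_isOpen (hw : WeakConv Pν P) {G : Set S} (hG : IsOpen G) :
    P G ≤ liminf (fun ν => Pν ν G) atTop := by
  let Q : ProbabilityMeasure S := ⟨P, inferInstance⟩
  let Qν : ℕ → ProbabilityMeasure S := fun ν => ⟨Pν ν, inferInstance⟩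
  have hQ : Tendsto Qν atTop (𝓝 Q) := ProbabilityMeasure.tendsto_iff_forall_integral_tendsto.2
    fun f => hw f f.continuous ⟨‖f‖, f.norm_coe_le_norm⟩
  exact ProbabilityMeasure.le_liminf_measure_open_of_tendsto hQ hG

/-- The open sets on which eventually all `g ν` exceed the level exhaust the superlevel set of
`g₀`. -/
lemma WeakConv.le_liminf_measure_lt (hw : WeakConv Pν P)
    (hlow : ∀ ξ, g₀ ξ ≤ liminf (Function.uncurry g) (atTop ×ˢ 𝓝 ξ)) (a : EReal) :
    P {ξ | a < g₀ ξ} ≤ liminf (fun ν => Pν ν {ξ | a < g ν ξ}) atTop := by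
  let G : ℕ → Set S := fun N => interior {ξ | ∀ ν ≥ N, a < g ν ξ}
  have hmono : Monotone G := fun N N' hN => interior_mono fun ξ hξ ν hν => hξ ν (hN.trans hν)
  have hcover : {ξ | a < g₀ ξ} ⊆ ⋃ N, G N := fun ξ hξ => by
    obtain ⟨p, hp, q, hq, hpq⟩ :=
      eventually_prod_iff.1 (eventually_lt_of_lt_liminf (lt_of_lt_of_le hξ (hlow ξ)))
    obtain ⟨N, hN⟩ := eventually_atTop.1 hp
    refine mem_iUnion.2 ⟨N, mem_interior_iff_mem_nhds.2 ?_⟩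
    filter_upwards [hq] with w hw ν hν using hpq (hN ν hν) hw
  refine (measure_mono hcover).trans ?_
  rw [hmono.measure_iUnion]
  refine iSup_le fun N => (hw.le_liminf_measure_of_isOpen isOpen_interior).trans ?_
  refine liminf_le_liminf ?_
  filter_upwards [eventually_ge_atTop N] with ν hν
  exact measure_mono fun ξ hξ => interior_subset hξ ν hν

/-- Fatou's lemma, applied to the measures of the superlevel sets in the layer-cake formula. -/
lemma WeakConv.eventually_lt_integral_max (hw : WeakConv Pν P)
    (hg : ∀ ν, EIntegrable (Pν ν) (g ν)) (hg₀ : EIntegrable P g₀)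
    (hlow : ∀ ξ, g₀ ξ ≤ liminf (Function.uncurry g) (atTop ×ˢ 𝓝 ξ)) {M r : ℝ}
    (hr : r < ∫ ξ, max ((g₀ ξ).toReal + M) 0 ∂P) :
    ∀ᶠ ν in atTop, r < ∫ ξ, max ((g ν ξ).toReal + M) 0 ∂(Pν ν) := by
  rcases lt_or_ge r 0 with hr₀ | hr₀
  · exact .of_forall fun ν => hr₀.trans_le (integral_nonneg fun _ => le_max_right _ _)
  have hmeas (ν : ℕ) : Measurable fun t : ℝ => Pν ν {ξ | ((t - M : ℝ) : EReal) < g ν ξ} :=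
    Antitone.measurable fun s t hst => measure_mono fun ξ hξ =>
      (EReal.coe_le_coe_iff.2 (sub_le_sub_right hst M)).trans_lt hξ
  have hfatou : ENNReal.ofReal (∫ ξ, max ((g₀ ξ).toReal + M) 0 ∂P)
      ≤ liminf (fun ν => ENNReal.ofReal (∫ ξ, max ((g ν ξ).toReal + M) 0 ∂(Pν ν))) atTop := by
    simp only [hg₀.ofReal_integral_max_add_eq, (hg _).ofReal_integral_max_add_eq]
    exact (lintegral_mono fun t => hw.le_liminf_measure_lt hlow _).trans (lintegral_liminf_le hmeas)
  have hlt : ENNReal.ofReal r < ENNReal.ofReal (∫ ξ, max ((g₀ ξ).toReal + M) 0 ∂P) :=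
    (ENNReal.ofReal_lt_ofReal_iff_of_nonneg hr₀).2 hr
  exact (eventually_lt_of_lt_liminf (hlt.trans_le hfatou)).mono fun ν hν =>
    (ENNReal.ofReal_lt_ofReal_iff_of_nonneg hr₀).1 hν

lemma WeakConv.eintegral_le_liminf (hw : WeakConv Pν P)
    (hg : ∀ ν, EIntegrable (Pν ν) (g ν)) (hg₀ : EIntegrable P g₀)
    (hlow : ∀ ξ, g₀ ξ ≤ liminf (Function.uncurry g) (atTop ×ˢ 𝓝 ξ))
    (htail : AsympInfIntegrable Pν g) :
    eintegral P g₀ ≤ liminf (fun ν => eintegral (Pν ν) (g ν)) atTop := by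
  rw [le_liminf_iff']
  intro a ha
  rw [hg₀.eintegral_eq_coe] at ha
  obtain ⟨r, har, hr⟩ := EReal.lt_iff_exists_real_btwn.1 ha
  obtain ⟨s, hrs, hs⟩ := exists_between (EReal.coe_lt_coe_iff.1 hr)
  obtain ⟨αb, hαb⟩ := htail (s - r) (sub_pos.2 hrs)
  have hM : (0 : ℝ) ≤ max 0 (-αb) := le_max_left _ _
  have hMα : -max 0 (-αb) ≤ αb := neg_le.1 (le_max_right _ _)
  generalize max 0 (-αb) = M at hM hMα
  have hlimit : s + M < ∫ ξ, max ((g₀ ξ).toReal + M) 0 ∂P := by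
    have hint := hg₀.integrable_toReal_add_const M
    calc s + M < ∫ ξ, (g₀ ξ).toReal ∂P + M := add_lt_add_left hs M
      _ = ∫ ξ, ((g₀ ξ).toReal + M) ∂P := (hg₀.integral_toReal_add_const M).symm
      _ ≤ ∫ ξ, max ((g₀ ξ).toReal + M) 0 ∂P :=
        integral_mono hint hint.pos_part fun _ => le_max_left _ _
  filter_upwards [hw.eventually_lt_integral_max hg hg₀ hlow hlimit, hαb (-M) hMα]
    with ν hmain hν
  rw [((hg ν).truncBelow _).eintegral_eq_coe, EReal.coe_le_coe_iff] at hν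
  rw [(hg ν).eintegral_eq_coe]
  refine har.le.trans (EReal.coe_le_coe_iff.2 ?_)
  linarith [(hg ν).integral_truncBelow_add_integral_max_le hM]

lemma WeakConv.tendsto_eintegral (hw : WeakConv Pν P)
    (hg : ∀ ν, EIntegrable (Pν ν) (g ν)) (hg₀ : EIntegrable P g₀)
    (hlsc : EpiPointwiseTendstoOn g atTop g₀ univ)
    (husc : EpiPointwiseTendstoOn (fun ν ξ => -g ν ξ) atTop (fun ξ => -g₀ ξ) univ)
    (hinf : AsympInfIntegrable Pν g) (hsup : AsympInfIntegrable Pν fun ν ξ => -g ν ξ) :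
    Tendsto (fun ν => eintegral (Pν ν) (g ν)) atTop (𝓝 (eintegral P g₀)) := by
  have hneg := hw.eintegral_le_liminf (fun ν => (hg ν).neg) hg₀.neg
    (fun ξ => by simpa only [nhdsWithin_univ] using husc.le_liminf ξ (mem_univ ξ)) hsup
  simp only [(hg _).eintegral_neg, hg₀.eintegral_neg] at hneg
  refine tendsto_of_le_liminf_of_limsup_le (hw.eintegral_le_liminf hg hg₀
    (fun ξ => by simpa only [nhdsWithin_univ] using hlsc.le_liminf ξ (mem_univ ξ)) hinf) ?_
  rw [← EReal.neg_le_neg_iff]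
  exact hneg.trans_eq EReal.liminf_neg

end WeakConvergence

/-! ### The Attouch–Wets distance -/

section AttouchWets

/-- The supremum of `u` over the closed ball of radius `ρ` about `c`, which is the integrand of the
Attouch–Wets distance up to the weight `exp (-ρ)`. It is the junk value `0` when `u` is unbounded on
the ball, which a Lipschitz `u` never is. -/
def ballSup {M : Type*} [PseudoMetricSpace M] (u : M → ℝ) (c : M) (ρ : ℝ) : ℝ :=
  sSup (u '' Metric.closedBall c ρ)

section BallSup

variable {M : Type*} [PseudoMetricSpace M] {u : M → ℝ} {c z : M} {K : NNReal} {ρ : ℝ}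

lemma ballSup_nonneg (hu : 0 ≤ u) : 0 ≤ ballSup u c ρ :=
  Real.sSup_nonneg <| forall_mem_image.2 fun w _ => hu w

lemma mem_upperBounds_image_closedBall (hu : LipschitzWith K u) :
    u c + K * ρ ∈ upperBounds (u '' Metric.closedBall c ρ) :=
  forall_mem_image.2 fun w hw => (hu.le_add_mul w c).trans (by gcongr; exact hw)

lemma le_ballSup (hu : LipschitzWith K u) (hz : dist z c ≤ ρ) :
    u z ≤ ballSup u c ρ :=
  le_csSup ⟨_, mem_upperBounds_image_closedBall hu⟩ (mem_image_of_mem u hz)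

lemma ballSup_le (hu : LipschitzWith K u) (hρ : 0 ≤ ρ) : ballSup u c ρ ≤ u c + K * ρ :=
  csSup_le ⟨_, mem_image_of_mem u (Metric.mem_closedBall_self hρ)⟩
    (mem_upperBounds_image_closedBall hu)

lemma monotone_ballSup (hu : LipschitzWith K u) (hu₀ : 0 ≤ u) : Monotone (ballSup u c) := by
  intro ρ ρ' hρρ'
  rcases lt_or_ge ρ 0 with hρ | hρ
  · simpa only [ballSup, Metric.closedBall_eq_empty.2 hρ, image_empty, Real.sSup_empty]
      using ballSup_nonneg hu₀
  · exact csSup_le_csSup ⟨_, mem_upperBounds_image_closedBall hu⟩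
      ⟨_, mem_image_of_mem u (Metric.mem_closedBall_self hρ)⟩
      (image_mono (Metric.closedBall_subset_closedBall hρρ'))

lemma integrableOn_ballSup_mul_exp_neg (hu : LipschitzWith K u) (hu₀ : 0 ≤ u) :
    IntegrableOn (fun ρ => ballSup u c ρ * Real.exp (-ρ)) (Ioi 0) := by
  have hexp : IntegrableOn (fun ρ : ℝ => Real.exp (-ρ)) (Ioi 0) := integrableOn_exp_neg_Ioi 0
  have hmulexp : IntegrableOn (fun ρ : ℝ => Real.exp (-ρ) * ρ) (Ioi 0) := by
    convert Real.GammaIntegral_convergent (s := 2) two_pos using 3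
    norm_num
  refine Integrable.mono' ((hexp.const_mul (u c)).add (hmulexp.const_mul K))
    ((monotone_ballSup hu hu₀).measurable.mul (by fun_prop)).aestronglyMeasurable ?_
  filter_upwards [ae_restrict_mem measurableSet_Ioi] with ρ hρ
  rw [Real.norm_of_nonneg (mul_nonneg (ballSup_nonneg hu₀) (Real.exp_pos _).le)]
  calc ballSup u c ρ * Real.exp (-ρ) ≤ (u c + K * ρ) * Real.exp (-ρ) := by
        gcongr
        exact ballSup_le hu (le_of_lt hρ)
    _ = u c * Real.exp (-ρ) + K * (Real.exp (-ρ) * ρ) := by ring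

lemma mul_exp_neg_dist_le_integral_ballSup (hu : LipschitzWith K u) (hu₀ : 0 ≤ u) (z : M) :
    u z * Real.exp (-dist z c) ≤ ∫ ρ in Ioi 0, ballSup u c ρ * Real.exp (-ρ) := by
  have hsub : Ioi (dist z c) ⊆ Ioi 0 := Ioi_subset_Ioi dist_nonneg
  have hint := integrableOn_ballSup_mul_exp_neg (c := c) hu hu₀
  calc u z * Real.exp (-dist z c) = ∫ ρ in Ioi (dist z c), u z * Real.exp (-ρ) := by
        rw [integral_const_mul, integral_exp_neg_Ioi]
    _ ≤ ∫ ρ in Ioi (dist z c), ballSup u c ρ * Real.exp (-ρ) :=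
        setIntegral_mono_on ((integrableOn_exp_neg_Ioi _).const_mul _) (hint.mono_set hsub)
          measurableSet_Ioi fun ρ hρ =>
            mul_le_mul_of_nonneg_right (le_ballSup hu (le_of_lt hρ)) (Real.exp_pos _).le
    _ ≤ ∫ ρ in Ioi 0, ballSup u c ρ * Real.exp (-ρ) :=
        setIntegral_mono_set hint
          (.of_forall fun _ => mul_nonneg (ballSup_nonneg hu₀) (Real.exp_pos _).le)
          hsub.eventuallyLE

end BallSup

variable {E : Type*} [PseudoMetricSpace E] {X : Set E} {zc : E × ℝ} {F : ℕ → E → EReal}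
  {f g V W : E → EReal} {x : E}

lemma abs_infDist_sub_mul_exp_le_awDist (z : E × ℝ) :
    |Metric.infDist z (epiSet X f) - Metric.infDist z (epiSet X g)| * Real.exp (-dist z zc) ≤
      awDist X zc f g :=
  mul_exp_neg_dist_le_integral_ballSup
    (lipschitzWith_one_norm.comp
      ((Metric.lipschitz_infDist_pt (epiSet X f)).sub (Metric.lipschitz_infDist_pt (epiSet X g))))
    (fun _ => abs_nonneg _) z

lemma tendsto_infDist_of_tendsto_awDist
    (h : Tendsto (fun κ => awDist X zc (F κ) W) atTop (𝓝 0)) (z : E × ℝ) :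
    Tendsto (fun κ => Metric.infDist z (epiSet X (F κ))) atTop
      (𝓝 (Metric.infDist z (epiSet X W))) := by
  rw [tendsto_iff_dist_tendsto_zero]
  refine squeeze_zero (fun _ => dist_nonneg) (fun κ => ?_) <|
    zero_mul (Real.exp (dist z zc)) ▸ h.mul_const (Real.exp (dist z zc))
  have hle := abs_infDist_sub_mul_exp_le_awDist (X := X) (zc := zc) (f := F κ) (g := W) z
  rwa [Real.exp_neg, ← div_eq_mul_inv, div_le_iff₀ (Real.exp_pos _)] at hle

lemma LscFcnOn.epiSet_nonempty (hf : LscFcnOn X f) : (epiSet X f).Nonempty := by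
  obtain ⟨x, hx, hfx⟩ := hf.2
  obtain ⟨r, hr, -⟩ := EReal.lt_iff_exists_real_btwn.1 (lt_top_iff_ne_top.2 hfx)
  exact ⟨(x, r), hx, hr.le⟩

lemma LscFcnOn.isClosed_epiSet (hf : LscFcnOn X f) (hX : IsClosed X) : IsClosed (epiSet X f) :=
  ((lowerSemicontinuousOn_iff_isClosed_epigraph hX).1 hf.1).preimage
    (f := fun p : E × ℝ => (p.1, (p.2 : EReal)))
    (continuous_fst.prodMk (continuous_coe_real_ereal.comp continuous_snd))

lemma EpiConvergesOn.le_of_tendsto_infDist (hX : IsClosed X) (hW : LscFcnOn X W)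
    (hV : EpiConvergesOn X F V)
    (h : ∀ z, Tendsto (fun κ => Metric.infDist z (epiSet X (F κ))) atTop
      (𝓝 (Metric.infDist z (epiSet X W)))) (hx : x ∈ X) : W x ≤ V x := by
  obtain ⟨zs, hzs, hlim, hsup⟩ := (hV x hx).2
  refine EReal.le_of_forall_lt_iff_le.1 fun r hr => ?_
  have hzero : Metric.infDist (x, r) (epiSet X W) ≤ 0 := by
    refine le_of_tendsto_of_tendsto (h (x, r)) (tendsto_iff_dist_tendsto_zero.1 hlim) ?_
    filter_upwards [eventually_lt_of_limsup_lt (hsup.trans_lt hr)] with κ hκ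
    have hmem : (zs κ, r) ∈ epiSet X (F κ) := ⟨hzs κ, hκ.le⟩
    refine (Metric.infDist_le_dist_of_mem hmem).trans_eq ?_
    rw [dist_prod_same_right, dist_comm]
  have hmem : (x, r) ∈ epiSet X W :=
    ((hW.isClosed_epiSet hX).mem_iff_infDist_zero hW.epiSet_nonempty).2
      (le_antisymm hzero Metric.infDist_nonneg)
  exact hmem.2

lemma exists_seq_mem_tendsto_of_tendsto_infDist_zero {M : Type*} [PseudoMetricSpace M]
    {S : ℕ → Set M} {z : M} (hS : ∀ κ, (S κ).Nonempty)
    (h : Tendsto (fun κ => Metric.infDist z (S κ)) atTop (𝓝 0)) :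
    ∃ p : ℕ → M, (∀ κ, p κ ∈ S κ) ∧ Tendsto p atTop (𝓝 z) := by
  have hclose : ∀ κ : ℕ, ∃ p ∈ S κ, dist z p < Metric.infDist z (S κ) + 1 / ((κ : ℝ) + 1) :=
    fun κ => (Metric.infDist_lt_iff (hS κ)).1 (lt_add_of_pos_right _ (by positivity))
  choose p hp hdist using hclose
  refine ⟨p, hp, tendsto_iff_dist_tendsto_zero.2 ?_⟩
  refine squeeze_zero (fun _ => dist_nonneg) (fun κ => ?_)
    (add_zero (0 : ℝ) ▸ h.add tendsto_one_div_add_atTop_nhds_zero_nat)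
  exact dist_comm (p κ) z ▸ (hdist κ).le

lemma EpiConvergesOn.ge_of_tendsto_infDist (hF : ∀ κ, LscFcnOn X (F κ))
    (hV : EpiConvergesOn X F V)
    (h : ∀ z, Tendsto (fun κ => Metric.infDist z (epiSet X (F κ))) atTop
      (𝓝 (Metric.infDist z (epiSet X W)))) (hx : x ∈ X) : V x ≤ W x := by
  refine EReal.le_of_forall_lt_iff_le.1 fun r hr => ?_
  have hmem : (x, r) ∈ epiSet X W := ⟨hx, hr.le⟩
  obtain ⟨p, hp, hlim⟩ := exists_seq_mem_tendsto_of_tendsto_infDist_zero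
    (fun κ => (hF κ).epiSet_nonempty) (Metric.infDist_zero_of_mem hmem ▸ h (x, r))
  calc V x ≤ liminf (fun κ => F κ (p κ).1) atTop :=
        (hV x hx).1 _ (fun κ => (hp κ).1) hlim.fst_nhds
    _ ≤ liminf (fun κ => ((p κ).2 : EReal)) atTop :=
        liminf_le_liminf (.of_forall fun κ => (hp κ).2)
    _ = r := ((continuous_coe_real_ereal.tendsto r).comp hlim.snd_nhds).liminf_eq

lemma EpiConvergesOn.exists_mem_eqOn_of_dlSeqCompact {𝒱 : Set (E → EReal)} (hX : IsClosed X)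
    (h𝒱 : ∀ W ∈ 𝒱, LscFcnOn X W) (hcompact : DlSeqCompact X zc 𝒱) (hF : ∀ κ, F κ ∈ 𝒱)
    (hV : EpiConvergesOn X F V) : ∃ W ∈ 𝒱, EqOn V W X := by
  obtain ⟨W, hW, τ, hτ, hdist⟩ := hcompact F hF
  have hinf := tendsto_infDist_of_tendsto_awDist hdist
  have hsub : EpiConvergesOn X (fun κ => F (τ κ)) V := hV.comp_tendsto hτ.tendsto_atTop
  exact ⟨W, hW, fun x hx => le_antisymm
    (hsub.ge_of_tendsto_infDist (fun κ => h𝒱 _ (hF (τ κ))) hinf hx)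
    (hsub.le_of_tendsto_infDist hX (h𝒱 W hW) hinf hx)⟩

lemma EpiConvergesOn.exists_extension_of_dlSeqCompact {𝒱 : Set (E → EReal)} (hX : IsClosed X)
    (h𝒱 : ∀ W ∈ 𝒱, LscFcnOn X W) (hcompact : DlSeqCompact X zc 𝒱) {σ : ℕ → ℕ}
    (hσ : σ.Injective) {U : ℕ → E → EReal} (hU : ∀ κ, U κ ∈ 𝒱) (hV : EpiConvergesOn X U V) :
    ∃ W ∈ 𝒱, EqOn V W X ∧
      ∃ F : ℕ → E → EReal, (∀ ν, F ν ∈ 𝒱) ∧ (∀ κ, F (σ κ) = U κ) ∧ EpiConvergesOn X F V :=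
  let ⟨W, hW, hVW⟩ := hV.exists_mem_eqOn_of_dlSeqCompact hX h𝒱 hcompact hU
  ⟨W, hW, hVW, Function.extend σ U fun _ => W, extend_const_mem hσ hU hW, hσ.extend_apply U _,
    ((hV.congr_limit hVW).extend_const (h𝒱 W hW).1 hσ).congr_limit hVW.symm⟩

end AttouchWets

/-! ### Bellman operators -/

section BellmanOperator

variable {E S : Type*} {X : Set E} {Y : E → S → Set E} {β : ℝ} {φ : E → E → S → ℝ}
  {f g : E → EReal} {x : E} {ξ : S}

lemma bop_congr (hY : Y x ξ ⊆ X) (hfg : EqOn f g X) : bop Y β φ f x ξ = bop Y β φ g x ξ :=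
  biInf_congr fun _ hy => by rw [hfg (hY hy)]

lemma EpiPointwiseTendstoOn.stageObjective [TopologicalSpace E] [TopologicalSpace S] {ι : Type*}
    {l : Filter ι} [l.NeBot] {φν : ι → E → E → S → ℝ} {F : ι → E → EReal} (hβ : 0 ≤ β)
    (hφ : EpiPointwiseTendstoOn (fun i p => ((φν i p.1 p.2.1 p.2.2 : ℝ) : EReal)) l
      (fun p => ((φ p.1 p.2.1 p.2.2 : ℝ) : EReal)) (X ×ˢ X ×ˢ (univ : Set S)))
    (hF : EpiPointwiseTendstoOn F l f X) (hx : x ∈ X) (hY : Y x ξ ⊆ X) :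
    EpiPointwiseTendstoOn (fun i y => ((φν i x y ξ : ℝ) : EReal) + (β : EReal) * F i y) l
      (fun y => ((φ x y ξ : ℝ) : EReal) + (β : EReal) * f y) (Y x ξ) :=
  .coe_add_const_mul hβ
    (hφ.comp_continuousOn (g := fun y => (x, y, ξ)) (by fun_prop)
      fun _ hy => ⟨hx, hY hy, mem_univ ξ⟩)
    (hF.comp_continuousOn continuousOn_id hY)

lemma WeakConv.tendsto_eintegral_of_equi [PseudoMetricSpace E] [PseudoMetricSpace S]
    [MeasurableSpace S] [OpensMeasurableSpace S] {P : Measure S} {Pν : ℕ → Measure S}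
    [IsProbabilityMeasure P] [∀ ν, IsProbabilityMeasure (Pν ν)] {b : ℕ → E → S → EReal}
    {b₀ : E → S → EReal} (hw : WeakConv Pν P) (hx : x ∈ X)
    (hb : ∀ ν, EIntegrable (Pν ν) (b ν x)) (hb₀ : EIntegrable P (b₀ x))
    (hlim : ∀ x ∈ X, ∀ ξ, Tendsto (fun ν => b ν x ξ) atTop (𝓝 (b₀ x ξ)))
    (hlsc : EquiLscOn (X ×ˢ (univ : Set S)) fun ν p => b ν p.1 p.2)
    (husc : EquiUscOn univ fun ν ξ => b ν x ξ)
    (hinf : liminfAlphaBot (fun α => liminfNuX X x (fun ν y =>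
      eintegral (Pν ν) (truncBelow (b ν y) α))) = 0)
    (hsup : limsupAlphaTop (fun α => limsupNu (fun ν =>
      eintegral (Pν ν) (truncAbove (b ν x) α))) = 0) :
    Tendsto (fun ν => eintegral (Pν ν) (b ν x)) atTop (𝓝 (eintegral P (b₀ x))) := by
  refine hw.tendsto_eintegral hb hb₀ ?_ ?_ (asympInfIntegrable_of_liminfAlphaBot hx hinf)
    (asympInfIntegrable_neg_of_limsupAlphaTop hb hsup)
  · exact (EquiLscOn.epiPointwiseTendstoOn (f := fun p => b₀ p.1 p.2) hlsc
      fun p hp => hlim p.1 hp.1 p.2).comp_continuousOn (g := fun ξ => (x, ξ))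
      (Continuous.prodMk_right x).continuousOn fun ξ _ => ⟨hx, mem_univ ξ⟩
  · exact EquiLscOn.epiPointwiseTendstoOn husc fun ξ _ => (hlim x hx ξ).neg

end BellmanOperator

theorem decision_rule_consistency_along_subsequence_general {E S : Type*} [MetricSpace E]
    [PseudoMetricSpace S] [MeasurableSpace S] [OpensMeasurableSpace S]
    {X : Set E} (hX : IsClosed X) {Y : E → S → Set E}
    (hY : ∀ x ∈ X, ∀ ξ, (Y x ξ).Nonempty ∧ IsCompact (Y x ξ) ∧ Y x ξ ⊆ X)
    {β : ℝ} (hβ : 0 ≤ β) {φ : E → E → S → ℝ} {φν : ℕ → E → E → S → ℝ}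
    {P : Measure S} {Pν : ℕ → Measure S}
    [IsProbabilityMeasure P] [∀ ν, IsProbabilityMeasure (Pν ν)]
    {zc : E × ℝ} {𝒱 : Set (E → EReal)} (h𝒱 : ∀ V ∈ 𝒱, LscFcnOn X V)
    (hint : ∀ V ∈ 𝒱, ∀ x ∈ X, EIntegrable P (bop Y β φ V x))
    (hintν : ∀ ν, ∀ V ∈ 𝒱, ∀ x ∈ X, EIntegrable (Pν ν) (bop Y β (φν ν) V x))
    (hweak : WeakConv Pν P)
    (hφe : EpiConvergesOn (X ×ˢ X ×ˢ (univ : Set S))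
      (fun ν p => ((φν ν p.1 p.2.1 p.2.2 : ℝ) : EReal))
      (fun p => ((φ p.1 p.2.1 p.2.2 : ℝ) : EReal)))
    (hφp : ∀ x ∈ X, ∀ y ∈ X, ∀ ξ, Tendsto (fun ν => φν ν x y ξ) atTop (𝓝 (φ x y ξ)))
    (hequi : ∀ F : ℕ → E → EReal, (∀ ν, F ν ∈ 𝒱) → (∃ W, EpiConvergesOn X F W) →
      EquiLscOn X F ∧
      (∀ x ∈ X, liminfAlphaBot (fun α => liminfNuX X x (fun ν y =>
        eintegral (Pν ν) (truncBelow (bop Y β (φν ν) (F ν) y) α))) = 0) ∧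
      EquiLscOn (X ×ˢ (univ : Set S)) (fun ν p => bop Y β (φν ν) (F ν) p.1 p.2) ∧
      (∀ x ∈ X,
        limsupAlphaTop (fun α => limsupNu (fun ν =>
          eintegral (Pν ν) (truncAbove (bop Y β (φν ν) (F ν) x) α))) = 0 ∧
        EquiUscOn (univ : Set S) (fun ν ξ => bop Y β (φν ν) (F ν) x ξ)))
    (hcompact : DlSeqCompact X zc 𝒱) {σ : ℕ → ℕ} (hσ : σ.Injective) {U : ℕ → E → EReal}
    (hfix : ∀ κ, U κ ∈ 𝒱 ∧
      ∀ x ∈ X, U κ x = eintegral (Pν (σ κ)) (bop Y β (φν (σ κ)) (U κ) x))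
    {V : E → EReal} (hconv : EpiConvergesOn X U V) :
    (∀ x ∈ X, V x = eintegral P (bop Y β φ V x)) ∧
    ∀ x ∈ X, ∀ ξ,
      OuterLimit (fun κ => ArgminOn (Y x ξ)
          (fun y => ((φν (σ κ) x y ξ : ℝ) : EReal) + (β : EReal) * U κ y)) ⊆
        ArgminOn (Y x ξ) (fun y => ((φ x y ξ : ℝ) : EReal) + (β : EReal) * V y) ∧
      (ArgminOn (Y x ξ)
        (fun y => ((φ x y ξ : ℝ) : EReal) + (β : EReal) * V y)).Nonempty := by
  obtain ⟨W, hW, hVW, F, hF, hFU, hFV⟩ :=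
    hconv.exists_extension_of_dlSeqCompact hX h𝒱 hcompact hσ fun κ => (hfix κ).1
  have hbVW : ∀ x ∈ X, bop Y β φ V x = bop Y β φ W x := fun x hx =>
    funext fun ξ => bop_congr (hY x hx ξ).2.2 hVW
  obtain ⟨hFlsc, hinf, hblsc, hbusc⟩ := hequi F hF ⟨V, hFV⟩
  have hFlim : ∀ x ∈ X, Tendsto (fun ν => F ν x) atTop (𝓝 (V x)) := fun x hx =>
    hFlsc.tendsto_of_epiConvergesOn hFV hx
  have hobj := fun x (hx : x ∈ X) ξ => EpiPointwiseTendstoOn.stageObjective hβ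
    (hφe.epiPointwiseTendstoOn fun p hp =>
      EReal.tendsto_coe.2 (hφp p.1 hp.1 p.2.1 hp.2.1 p.2.2))
    (hFV.epiPointwiseTendstoOn hFlim) hx (hY x hx ξ).2.2
  have hblim : ∀ x ∈ X, ∀ ξ,
      Tendsto (fun ν => bop Y β (φν ν) (F ν) x ξ) atTop (𝓝 (bop Y β φ V x ξ)) := fun x hx ξ =>
    (hobj x hx ξ).tendsto_iInf (hY x hx ξ).2.1
  refine ⟨fun x hx => ?_, fun x hx ξ => ⟨?_, ?_⟩⟩
  · have hBlim : Tendsto (fun ν => eintegral (Pν ν) (bop Y β (φν ν) (F ν) x)) atTop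
        (𝓝 (eintegral P (bop Y β φ V x))) :=
      hweak.tendsto_eintegral_of_equi hx (fun ν => hintν ν (F ν) (hF ν) x hx)
        (hbVW x hx ▸ hint W hW x hx) hblim hblsc (hbusc x hx).2 (hinf x hx) (hbusc x hx).1
    refine tendsto_nhds_unique_of_eventuallyEq ((hFlim x hx).comp hσ.nat_tendsto_atTop)
      (hBlim.comp hσ.nat_tendsto_atTop) (.of_forall fun κ => ?_)
    simp only [Function.comp_apply, hFU, ← (hfix κ).2 x hx]
  · have hsub := (hobj x hx ξ).comp_tendsto hσ.nat_tendsto_atTop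
    simpa only [hFU] using hsub.outerLimit_argminOn_subset (hY x hx ξ).2.1.isClosed
  · exact (hobj x hx ξ).nonempty_argminOn (hY x hx ξ).2.1 (hY x hx ξ).1

/-- Consistency of approximating decision rules along epi-convergent
subsequences. -/
theorem decision_rule_consistency_along_subsequence {n m : ℕ}
    (X : Set (EuclideanSpace ℝ (Fin n))) (hX : IsClosed X)
    (Ξ : Set (EuclideanSpace ℝ (Fin m))) (hΞ : IsClosed Ξ)
    (Y : EuclideanSpace ℝ (Fin n) → Ξ → Set (EuclideanSpace ℝ (Fin n)))
    (hY : ∀ x ∈ X, ∀ ξ : Ξ, (Y x ξ).Nonempty ∧ IsCompact (Y x ξ) ∧ Y x ξ ⊆ X)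
    (β : ℝ) (hβ : β ∈ Set.Ioo (0 : ℝ) 1)
    (φ : EuclideanSpace ℝ (Fin n) → EuclideanSpace ℝ (Fin n) → Ξ → ℝ)
    (φν : ℕ → EuclideanSpace ℝ (Fin n) → EuclideanSpace ℝ (Fin n) → Ξ → ℝ)
    (P : Measure Ξ) (Pν : ℕ → Measure Ξ)
    [IsProbabilityMeasure P] [∀ ν, IsProbabilityMeasure (Pν ν)]
    (zc : EuclideanSpace ℝ (Fin n) × ℝ)
    (𝒱 : Set (EuclideanSpace ℝ (Fin n) → EReal))
    (h𝒱lsc : ∀ V ∈ 𝒱, LscFcnOn X V)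
    -- Assumption 2
    (hA2 : ∀ V ∈ 𝒱, (∀ x ∈ X, EIntegrable P (bop Y β φ V x)) ∧
      (fun x => eintegral P (bop Y β φ V x)) ∈ 𝒱)
    (hA2ν : ∀ ν, ∀ V ∈ 𝒱, (∀ x ∈ X, EIntegrable (Pν ν) (bop Y β (φν ν) V x)) ∧
      (fun x => eintegral (Pν ν) (bop Y β (φν ν) V x)) ∈ 𝒱)
    -- 𝒱 is closed under the Attouch–Wets distance
    (h𝒱closed : DlSeqClosed X zc 𝒱)
    -- convergence of the data
    (hweak : WeakConv Pν P)
    (hφe : EpiConvergesOn (X ×ˢ X ×ˢ (univ : Set Ξ))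
      (fun ν p => ((φν ν p.1 p.2.1 p.2.2 : ℝ) : EReal))
      (fun p => ((φ p.1 p.2.1 p.2.2 : ℝ) : EReal)))
    (hφp : ∀ x ∈ X, ∀ y ∈ X, ∀ ξ : Ξ,
      Tendsto (fun ν => φν ν x y ξ) atTop (𝓝 (φ x y ξ)))
    -- every epi-convergent sequence in 𝒱 is equi-lsc and satisfies (i) and (ii)
    (hequi : ∀ Vs : ℕ → (EuclideanSpace ℝ (Fin n) → EReal),
      (∀ ν, Vs ν ∈ 𝒱) → (∃ W, EpiConvergesOn X Vs W) →
      EquiLscOn X Vs ∧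
      (∀ xb ∈ X, liminfAlphaBot (fun α => liminfNuX X xb (fun ν x =>
        eintegral (Pν ν) (truncBelow (bop Y β (φν ν) (Vs ν) x) α))) = 0) ∧
      (∀ ν, LowerSemicontinuousOn
        (fun p : EuclideanSpace ℝ (Fin n) × Ξ => bop Y β (φν ν) (Vs ν) p.1 p.2)
        (X ×ˢ (univ : Set Ξ))) ∧
      EquiLscOn (X ×ˢ (univ : Set Ξ)) (fun ν p => bop Y β (φν ν) (Vs ν) p.1 p.2) ∧
      (∀ xb ∈ X,
        limsupAlphaTop (fun α => limsupNu (fun ν =>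
          eintegral (Pν ν) (truncAbove (bop Y β (φν ν) (Vs ν) xb) α))) = 0 ∧
        (∀ ν, UpperSemicontinuous (fun ξ : Ξ => bop Y β (φν ν) (Vs ν) xb ξ)) ∧
        EquiUscOn (univ : Set Ξ) (fun ν ξ => bop Y β (φν ν) (Vs ν) xb ξ)))
    -- 𝒱 is compact under the Attouch–Wets distance and each B_ν has a fixed point
    (hcompact : DlSeqCompact X zc 𝒱)
    (Vs : ℕ → (EuclideanSpace ℝ (Fin n) → EReal))
    (hfix : ∀ ν, Vs ν ∈ 𝒱 ∧ ∀ x ∈ X, Vs ν x = eintegral (Pν ν) (bop Y β (φν ν) (Vs ν) x))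
    -- a subsequence epi-converging to V
    (σ : ℕ → ℕ) (hσ : StrictMono σ)
    (V : EuclideanSpace ℝ (Fin n) → EReal)
    (hconv : EpiConvergesOn X (fun κ => Vs (σ κ)) V) :
    (∀ x ∈ X, V x = eintegral P (bop Y β φ V x)) ∧
    ∀ x ∈ X, ∀ ξ : Ξ,
      OuterLimit (fun κ => ArgminOn (Y x ξ)
          (fun y => ((φν (σ κ) x y ξ : ℝ) : EReal) + (β : EReal) * Vs (σ κ) y)) ⊆
        ArgminOn (Y x ξ) (fun y => ((φ x y ξ : ℝ) : EReal) + (β : EReal) * V y) ∧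
      (ArgminOn (Y x ξ)
        (fun y => ((φ x y ξ : ℝ) : EReal) + (β : EReal) * V y)).Nonempty :=
  decision_rule_consistency_along_subsequence_general hX hY hβ.1.le h𝒱lsc
    (fun W hW => (hA2 W hW).1) (fun ν W hW => (hA2ν ν W hW).1) hweak hφe hφp
    (fun F hF hW =>
      let ⟨hlsc, hinf, _, hblsc, hsup⟩ := hequi F hF hW
      ⟨hlsc, hinf, hblsc, fun x hx => ⟨(hsup x hx).1, (hsup x hx).2.2⟩⟩)
    hcompact hσ.injective (fun κ => ⟨(hfix (σ κ)).1, (hfix (σ κ)).2⟩) hconv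

end
end

section
/- Convergence of infima under epi-convergence with uniformly bounded domains: Let f, f_ν : ℝⁿ → ℝ̄ (ν ∈ ℕ) with f proper (f(x) > −∞ for all x and f not identically ∞), and suppose f_ν epi-converges to f. Then the outer limit of the sets argmin f_ν is contained in argmin f. If, in addition, the union over ν ∈ ℕ of the sets {x ∈ ℝⁿ : f_ν(x) < ∞} is bounded, then inf f_ν → inf f. -/
/-!
The liminf inequality of epi-convergence passes to subsequences, because a sequence indexed by a
subsequence and converging to `x` can be filled up by the constant value `x` at the missing indices.

Hence, if `x` is a limit of minimizers `x_κ` of `f_{φ κ}`, then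
`f x ≤ liminf f_{φ κ}(x_κ) ≤ limsup f_ν(y_ν) ≤ f y` for every `y`, where `y_ν` is a recovery
sequence for `y`. Recovery sequences also give `limsup inf f_ν ≤ inf f`. For the lower bound, points
of a compact set where `f_ν` takes values at most `c` for infinitely many `ν` cluster at a point
where `f` is at most `c`; the infima of the `f_ν` do not change when they are restricted to a
compact set containing all domains.
-/

open Filter Topology Set

/-- The set of (global) minimizers of an extended-real-valued function. -/
def Argmin {E : Type*} (g : E → EReal) : Set E := {x | ∀ y, g x ≤ g y}

theorem tendsto_extend_cofinite {α β γ : Type*} {φ : α → β} {s : α → γ} {g : β → γ}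
    {l : Filter γ} (hφ : φ.Injective) (hs : Tendsto s cofinite l) (hg : Tendsto g cofinite l) :
    Tendsto (Function.extend φ s g) cofinite l := by
  intro U hU
  have hfin : (φ '' (s ⁻¹' U)ᶜ ∪ (g ⁻¹' U)ᶜ).Finite := ((hs hU).image φ).union (hg hU)
  refine hfin.subset fun b hb => ?_
  by_cases hrange : ∃ a, φ a = b
  · obtain ⟨a, rfl⟩ := hrange
    exact .inl ⟨a, by simpa [hφ.extend_apply] using hb, rfl⟩
  · exact .inr (by simpa [Function.extend_apply' _ _ _ hrange] using hb)

theorem biInf_le_iInf_of_lt_top_subset {α β : Type*} [CompleteLattice β] {g : α → β} {K : Set α}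
    (hK : {x | g x < ⊤} ⊆ K) : ⨅ x ∈ K, g x ≤ ⨅ x, g x := by
  refine le_iInf fun x => ?_
  rcases eq_or_ne (g x) ⊤ with htop | htop
  · exact htop ▸ le_top
  · exact iInf₂_le x (hK htop.lt_top)

namespace EpiConvergesOn

variable {E : Type*} [TopologicalSpace E] {Z K : Set E} {F : ℕ → E → EReal} {f : E → EReal}

theorem le_liminf_comp (h : EpiConvergesOn Z F f) {φ : ℕ → ℕ} (hφ : φ.Injective) {s : ℕ → E}
    (hsZ : ∀ κ, s κ ∈ Z) {x : E} (hxZ : x ∈ Z) (hs : Tendsto s atTop (𝓝 x)) :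
    f x ≤ liminf (fun κ => F (φ κ) (s κ)) atTop := by
  set t : ℕ → E := Function.extend φ s fun _ => x with ht
  have htφ (κ : ℕ) : t (φ κ) = s κ := hφ.extend_apply s _ κ
  have htZ (ν : ℕ) : t ν ∈ Z := by
    by_cases hrange : ∃ κ, φ κ = ν
    · obtain ⟨κ, rfl⟩ := hrange
      exact htφ κ ▸ hsZ κ
    · rwa [ht, Function.extend_apply' _ _ _ hrange]
  have htx : Tendsto t atTop (𝓝 x) := by
    rw [← Nat.cofinite_eq_atTop] at hs ⊢
    exact tendsto_extend_cofinite hφ hs tendsto_const_nhds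
  calc f x ≤ liminf (fun ν => F ν (t ν)) atTop := (h x hxZ).1 t htZ htx
    _ ≤ liminf (fun ν => F ν (t ν)) (map φ atTop) :=
      liminf_le_liminf_of_le hφ.nat_tendsto_atTop
    _ = liminf (fun κ => F (φ κ) (t (φ κ))) atTop := (liminf_comp _ φ atTop).symm
    _ = liminf (fun κ => F (φ κ) (s κ)) atTop := by simp only [htφ]

theorem isMinOn_of_tendsto (h : EpiConvergesOn Z F f) {φ : ℕ → ℕ} (hφ : φ.Injective) {s : ℕ → E}
    (hsZ : ∀ κ, s κ ∈ Z) (hmin : ∀ κ, IsMinOn (F (φ κ)) Z (s κ)) {x : E} (hxZ : x ∈ Z)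
    (hs : Tendsto s atTop (𝓝 x)) : IsMinOn f Z x := by
  intro y hyZ
  obtain ⟨ys, hysZ, -, hys⟩ := (h y hyZ).2
  calc f x ≤ liminf (fun κ => F (φ κ) (s κ)) atTop := h.le_liminf_comp hφ hsZ hxZ hs
    _ ≤ limsup (fun κ => F (φ κ) (s κ)) atTop := liminf_le_limsup
    _ ≤ limsup (fun κ => F (φ κ) (ys (φ κ))) atTop :=
      limsup_le_limsup (.of_forall fun κ => hmin κ (hysZ (φ κ)))
    _ = limsup (fun ν => F ν (ys ν)) (map φ atTop) :=
      limsup_comp (fun ν => F ν (ys ν)) φ atTop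
    _ ≤ limsup (fun ν => F ν (ys ν)) atTop := limsup_le_limsup_of_le hφ.nat_tendsto_atTop
    _ ≤ f y := hys

theorem outerLimit_argmin_subset (h : EpiConvergesOn univ F f) :
    OuterLimit (fun ν => Argmin (F ν)) ⊆ Argmin f := by
  rintro x ⟨φ, hφ, s, hmin, hs⟩ y
  exact h.isMinOn_of_tendsto hφ.injective (fun _ => mem_univ _) (fun κ y _ => hmin κ y)
    (mem_univ x) hs (mem_univ y)

theorem limsup_biInf_le (h : EpiConvergesOn Z F f) :
    limsup (fun ν => ⨅ z ∈ Z, F ν z) atTop ≤ ⨅ z ∈ Z, f z := by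
  refine le_iInf₂ fun y hyZ => ?_
  obtain ⟨ys, hysZ, -, hys⟩ := (h y hyZ).2
  exact (limsup_le_limsup (.of_forall fun ν => iInf₂_le (ys ν) (hysZ ν))).trans hys

theorem exists_mem_le_of_frequently (h : EpiConvergesOn Z F f) (hKZ : K ⊆ Z)
    (hK : IsSeqCompact K) {c : EReal} (hc : ∃ᶠ ν in atTop, ∃ z ∈ K, F ν z ≤ c) :
    ∃ z ∈ K, f z ≤ c := by
  obtain ⟨φ, hφ, hφc⟩ := extraction_of_frequently_atTop hc
  choose s hsK hsc using hφc
  obtain ⟨x, hxK, ψ, hψ, hx⟩ := hK hsK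
  refine ⟨x, hxK, ?_⟩
  calc f x ≤ liminf (fun κ => F (φ (ψ κ)) (s (ψ κ))) atTop :=
      h.le_liminf_comp (hφ.comp hψ).injective (fun κ => hKZ (hsK (ψ κ))) (hKZ hxK) hx
    _ ≤ liminf (fun _ : ℕ => c) atTop := liminf_le_liminf (.of_forall fun κ => hsc (ψ κ))
    _ = c := liminf_const c

theorem biInf_le_liminf_biInf (h : EpiConvergesOn Z F f) (hKZ : K ⊆ Z) (hK : IsSeqCompact K) :
    ⨅ z ∈ K, f z ≤ liminf (fun ν => ⨅ z ∈ K, F ν z) atTop := by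
  by_contra! hlt
  obtain ⟨c, hc, hcf⟩ := exists_between hlt
  have hfreq : ∃ᶠ ν in atTop, ∃ z ∈ K, F ν z ≤ c :=
    (frequently_lt_of_liminf_lt (by isBoundedDefault) hc).mono fun ν hν => by
      obtain ⟨z, hzK, hz⟩ : ∃ z ∈ K, F ν z < c := by simpa only [iInf_lt_iff, exists_prop] using hν
      exact ⟨z, hzK, hz.le⟩
  obtain ⟨x, hxK, hx⟩ := h.exists_mem_le_of_frequently hKZ hK hfreq
  exact ((iInf₂_le x hxK).trans hx).not_gt hcf

theorem tendsto_biInf (h : EpiConvergesOn Z F f) (hKZ : K ⊆ Z) (hK : IsSeqCompact K)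
    (hFK : ∀ᶠ ν in atTop, ⨅ z ∈ K, F ν z ≤ ⨅ z ∈ Z, F ν z) :
    Tendsto (fun ν => ⨅ z ∈ Z, F ν z) atTop (𝓝 (⨅ z ∈ Z, f z)) := by
  refine tendsto_of_le_liminf_of_limsup_le ?_ h.limsup_biInf_le
  calc ⨅ z ∈ Z, f z ≤ ⨅ z ∈ K, f z := biInf_mono hKZ
    _ ≤ liminf (fun ν => ⨅ z ∈ K, F ν z) atTop := h.biInf_le_liminf_biInf hKZ hK
    _ ≤ liminf (fun ν => ⨅ z ∈ Z, F ν z) atTop := liminf_le_liminf hFK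

theorem tendsto_iInf (h : EpiConvergesOn univ F f) (hK : IsSeqCompact K)
    (hFK : ∀ᶠ ν in atTop, {x | F ν x < ⊤} ⊆ K) :
    Tendsto (fun ν => ⨅ x, F ν x) atTop (𝓝 (⨅ x, f x)) := by
  simpa only [iInf_univ] using h.tendsto_biInf (subset_univ K) hK
    (hFK.mono fun ν hν => by simpa only [iInf_univ] using biInf_le_iInf_of_lt_top_subset hν)

end EpiConvergesOn

theorem argmin_and_inf_convergence_of_epi_general {E : Type*} [TopologicalSpace E]
    {f : E → EReal} {F : ℕ → E → EReal} (hepi : EpiConvergesOn univ F f) :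
    OuterLimit (fun ν => Argmin (F ν)) ⊆ Argmin f ∧
    ∀ K : Set E, IsSeqCompact K → (∀ᶠ ν in atTop, {x | F ν x < ⊤} ⊆ K) →
      Tendsto (fun ν => ⨅ x, F ν x) atTop (𝓝 (⨅ x, f x)) :=
  ⟨hepi.outerLimit_argmin_subset, fun _ => hepi.tendsto_iInf⟩

/-- Convergence of minimizers and infima under epi-convergence with
uniformly bounded domains. -/
theorem argmin_and_inf_convergence_of_epi {n : ℕ}
    (f : EuclideanSpace ℝ (Fin n) → EReal)
    (fν : ℕ → EuclideanSpace ℝ (Fin n) → EReal)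
    (hproper : (∀ x, f x ≠ ⊥) ∧ ∃ x, f x ≠ ⊤)
    (hepi : EpiConvergesOn Set.univ fν f) :
    OuterLimit (fun ν => Argmin (fν ν)) ⊆ Argmin f ∧
    (Bornology.IsBounded (⋃ ν, {x | fν ν x < ⊤}) →
      Tendsto (fun ν => ⨅ x, fν ν x) atTop (𝓝 (⨅ x, f x))) := by
  obtain ⟨hargmin, hinf⟩ := argmin_and_inf_convergence_of_epi_general hepi
  exact ⟨hargmin, fun hb => hinf _ hb.isCompact_closure.isSeqCompact
    (.of_forall fun ν => (subset_iUnion (fun ν => {x | fν ν x < ⊤}) ν).trans subset_closure)⟩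
end
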